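/- Let p be a prime with p ≡ 1 (mod 3), write p = A² + 3B² with integers A, B and A ≡ 1 (mod 3), and let a be an integer with p ∤ a. If a^((p−1)/3) ≡ 1 (mod p), then V_p(x + a/(2x²)) = (2p − 1 + 2A)/3; if a^((p−1)/3) ≡ (−1 + A·B⁻¹)/2 (mod p), then V_p(x + a/(2x²)) = (2p − 1 − A + 3B)/3; and if a^((p−1)/3) ≡ (−1 − A·B⁻¹)/2 (mod p), then V_p(x + a/(2x²)) = (2p − 1 − A − 3B)/3. -/

import Mathlib

/-!
The roots `x`, `y`, `z` of `2 X³ - 2 b X² + a` satisfy `x y + y z + z x = 0` and `2 x y z = -a`, so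
the other two members of the fibre through `x` are the roots of a quadratic, whose discriminant is
`a² (1 + 8 x³ / a)`. Giving each `x` the weight `3 - #{roots of its quadratic}` makes every nonempty
fibre weigh exactly `3`, whence `3 V = 2 p - 1 - S(a⁻¹)` with `S(u) = ∑ x, χ(1 + u x³)` for the
quadratic character `χ`.

Let `ψ` be a cubic character and `J = J(ψ, χ)` its Jacobi sum, so that `J J̄ = p`. Then
`S(u) = ψ(u⁻¹) J + ψ(u) J̄`, and `S(1)² + S(1) S(u) + S(u)² = 3 p` for every noncube `u`. Since
`S(1)` is even and `S(1) ≡ S(u) ≡ 1 (mod 3)`, this puts `p` in the form `C² + 3 E²` with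
`S(1) = 2 C` and `S(u) = -C + 3 E`; uniqueness of that form leaves only the sign of `E` open, which
is settled by the congruence `S(u) ≡ S(1) u ^ ((p - 1) / 3) (mod p)` from Euler's criterion.
-/

open Finset

section PowersInFiniteFields

theorem exists_pow_orderOf_eq_of_map_eq_one {G H : Type*} [Group G] [Group H] (f : G →* H) {g : G}
    (hg : ∀ x, x ∈ Subgroup.zpowers g) {u : G} (hu : f u = 1) : ∃ c, c ^ orderOf (f g) = u := by
  obtain ⟨k, rfl⟩ := Subgroup.mem_zpowers_iff.mp (hg u)
  rw [map_zpow, ← orderOf_dvd_iff_zpow_eq_one] at hu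
  obtain ⟨j, rfl⟩ := hu
  exact ⟨g ^ j, by rw [← zpow_natCast, ← zpow_mul, mul_comm]⟩

variable {F : Type*} [Field F]

theorem exists_pow_orderOf_eq_of_mulChar_eq_one [Finite F] {R : Type*} [CommRing R]
    {χ : MulChar F R} {u : F} (hu : u ≠ 0) (hχu : χ u = 1) : ∃ c, c ^ orderOf χ = u := by
  obtain ⟨g, hg⟩ := IsCyclic.exists_generator (α := Fˣ)
  have hord : orderOf (χ.toUnitHom g) = orderOf χ := by
    refine orderOf_eq_orderOf_iff.mpr fun n ↦ ?_
    rw [MulChar.eq_iff hg, Units.ext_iff]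
    simp [MulChar.pow_apply_coe]
  obtain ⟨c, hc⟩ := exists_pow_orderOf_eq_of_map_eq_one χ.toUnitHom hg
    (u := Units.mk0 u hu) (Units.ext hχu)
  rw [hord] at hc
  exact ⟨c, by simpa using congrArg Units.val hc⟩

variable [Fintype F]

theorem natCast_ne_zero_of_dvd_card_sub_one {n : ℕ} (hn : n ∣ Fintype.card F - 1) :
    (n : F) ≠ 0 := by
  obtain ⟨m, hm⟩ := hn
  have hcard : Fintype.card F = n * m + 1 := by
    have := Fintype.card_pos (α := F)
    omega
  have hcast := FiniteField.cast_card_eq_zero F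
  rw [hcard, Nat.cast_add_one, Nat.cast_mul] at hcast
  intro h
  simp [h] at hcast

theorem exists_isPrimitiveRoot_of_dvd_card_sub_one {n : ℕ} (hn : n ∣ Fintype.card F - 1) :
    ∃ ζ : F, IsPrimitiveRoot ζ n := by
  classical
  obtain ⟨g, hg⟩ := IsCyclic.exists_generator (α := Fˣ)
  obtain ⟨m, hm⟩ := hn
  have hord : orderOf g = n * m := by
    rw [orderOf_eq_card_of_forall_mem_zpowers hg, Nat.card_eq_fintype_card, Fintype.card_units, hm]
  have hprim : IsPrimitiveRoot g (n * m) := hord ▸ IsPrimitiveRoot.orderOf g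
  exact ⟨_, (hprim.pow (hord ▸ orderOf_pos g) (mul_comm n m)).map_of_injective
    (f := Units.coeHom F) Units.val_injective⟩

theorem exists_pow_eq_iff_pow_card_sub_one_div_eq_one {n : ℕ} (hn : n ∣ Fintype.card F - 1)
    {u : F} (hu : u ≠ 0) : (∃ c, c ^ n = u) ↔ u ^ ((Fintype.card F - 1) / n) = 1 := by
  classical
  obtain ⟨m, hm⟩ := hn
  have hpos : 0 < n * m := hm ▸ Nat.sub_pos_of_lt Fintype.one_lt_card
  have hn0 : 0 < n := pos_of_mul_pos_left hpos m.zero_le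
  have hm0 : m ≠ 0 := (pos_of_mul_pos_right hpos n.zero_le).ne'
  rw [hm, Nat.mul_div_cancel_left m hn0]
  constructor
  · rintro ⟨c, rfl⟩
    have hc : c ≠ 0 := by rintro rfl; simp [hn0.ne'] at hu
    rw [← pow_mul, ← hm, FiniteField.pow_card_sub_one_eq_one c hc]
  · intro hum
    obtain ⟨g, hg⟩ := IsCyclic.exists_generator (α := Fˣ)
    have hord : orderOf (powMonoidHom m g) = n := by
      rw [powMonoidHom_apply, orderOf_pow, orderOf_eq_card_of_forall_mem_zpowers hg,
        Nat.card_eq_fintype_card, Fintype.card_units, hm, Nat.gcd_mul_left_left,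
        Nat.mul_div_cancel _ (Nat.pos_of_ne_zero hm0)]
    obtain ⟨c, hc⟩ := exists_pow_orderOf_eq_of_map_eq_one (powMonoidHom m) hg
      (u := Units.mk0 u hu) (Units.ext hum)
    rw [hord] at hc
    exact ⟨c, by simpa using congrArg Units.val hc⟩

theorem exists_forall_pow_ne {n : ℕ} (hn : n ∣ Fintype.card F - 1) (hn1 : n ≠ 1) :
    ∃ u : F, ∀ c, c ^ n ≠ u := by
  by_contra! hsurj
  obtain ⟨ζ, hζ⟩ := exists_isPrimitiveRoot_of_dvd_card_sub_one (F := F) hn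
  have hinj : Function.Injective fun c : F ↦ c ^ n := Finite.injective_iff_surjective.mpr hsurj
  have hζ1 : ζ = 1 := hinj (by simp [hζ.pow_eq_one])
  exact hn1 (by rw [hζ.eq_orderOf, hζ1, orderOf_one])

theorem sum_mulChar_mul_mulChar_one_add_mul {R : Type*} [CommRing R] (χ ψ : MulChar F R) {u : F}
    (hu : u ≠ 0) : ∑ t, χ t * ψ (1 + u * t) = χ (-u⁻¹) * jacobiSum χ ψ := by
  rw [jacobiSum, mul_sum]
  refine (Fintype.sum_bijective (fun s ↦ -u⁻¹ * s) (mulLeft_bijective₀ _ (by simpa)) _ _ ?_).symm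
  intro s
  rw [map_mul, mul_assoc]
  congr 3
  field_simp
  ring

theorem sum_pow_eq_zero_of_not_dvd {i : ℕ} (hi : ¬ Fintype.card F - 1 ∣ i) :
    ∑ x : F, x ^ i = 0 := by
  obtain ⟨g, hg⟩ := not_forall.mp (mt (FiniteField.forall_pow_eq_one_iff F i).mp hi)
  have hinv : ∑ x : F, (g * x) ^ i = ∑ x : F, x ^ i :=
    Fintype.sum_bijective _ (mulLeft_bijective₀ (g : F) g.ne_zero) _ _ fun _ ↦ rfl
  simp_rw [mul_pow, ← mul_sum] at hinv
  by_contra hsum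
  exact hg (Units.ext (by simpa using mul_right_cancel₀ hsum (hinv.trans (one_mul _).symm)))

theorem card_filter_pow_eq_pow [DecidableEq F] {n : ℕ} (hn : n ∣ Fintype.card F - 1)
    {c : F} (hc : c ≠ 0) : #{x : F | x ^ n = c ^ n} = n := by
  obtain ⟨ζ, hζ⟩ := exists_isPrimitiveRoot_of_dvd_card_sub_one (F := F) hn
  have hn0 : 0 < n :=
    Nat.pos_of_dvd_of_pos hn (Nat.sub_pos_of_lt Fintype.one_lt_card)
  have hroots : (univ.filter fun x : F ↦ x ^ n = c ^ n) =
      ⟨Polynomial.nthRoots n (c ^ n), hζ.nthRoots_nodup (pow_ne_zero n hc)⟩ := by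
    ext x
    simp [Polynomial.mem_nthRoots hn0]
  rw [hroots, card_mk, hζ.card_nthRoots, if_pos ⟨c, rfl⟩]

theorem card_filter_pow_eq_sum_mulChar [DecidableEq F] {R : Type*} [CommRing R] [IsDomain R]
    (χ : MulChar F R) (t : F) :
    (#{x : F | x ^ orderOf χ = t} : R) = ∑ i ∈ range (orderOf χ), χ t ^ i := by
  have hn := χ.orderOf_dvd_card_sub_one
  have hn0 := χ.orderOf_pos
  rcases eq_or_ne t 0 with rfl | ht
  · rw [MulChar.map_zero, zero_geom_sum]
    simp [hn0.ne', Finset.filter_eq']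
  by_cases hpow : ∃ c, c ^ orderOf χ = t
  · obtain ⟨c, rfl⟩ := hpow
    have hc : c ≠ 0 := by rintro rfl; simp [hn0.ne'] at ht
    have hχ : χ (c ^ orderOf χ) = 1 := by
      rw [map_pow, ← MulChar.pow_apply' _ hn0.ne', pow_orderOf_eq_one, MulChar.one_apply hc.isUnit]
    rw [card_filter_pow_eq_pow hn hc, hχ]
    simp
  · have hχ : χ t ≠ 1 := fun h ↦ hpow (exists_pow_orderOf_eq_of_mulChar_eq_one ht h)
    have hχn : χ t ^ orderOf χ = 1 := by
      rw [← MulChar.pow_apply' _ hn0.ne', pow_orderOf_eq_one, MulChar.one_apply ht.isUnit]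
    have hgeom : (∑ i ∈ range (orderOf χ), χ t ^ i) * (χ t - 1) = 0 := by
      rw [geom_sum_mul, hχn, sub_self]
    rw [(mul_eq_zero.mp hgeom).resolve_right (sub_ne_zero.mpr hχ),
      filter_eq_empty_iff.mpr fun x _ hx ↦ hpow ⟨x, hx⟩, card_empty, Nat.cast_zero]

theorem sum_mulChar_one_add_mul_pow {R : Type*} [CommRing R] [IsDomain R] (χ : MulChar F R)
    {ψ : MulChar F R} (hψ : ψ ≠ 1) {u : F} (hu : u ≠ 0) :
    ∑ x, ψ (1 + u * x ^ orderOf χ) =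
      ∑ i ∈ Ico 1 (orderOf χ), (χ ^ i) (-u⁻¹) * jacobiSum (χ ^ i) ψ := by
  have := Classical.decEq F
  have hbij : Function.Bijective fun t ↦ 1 + u * t :=
    (AddGroup.addLeft_bijective 1).comp (mulLeft_bijective₀ u hu)
  have hzero : ∑ t, ψ (1 + u * t) = 0 :=
    (hbij.sum_comp ψ).trans (MulChar.sum_eq_zero_of_ne_one hψ)
  calc ∑ x, ψ (1 + u * x ^ orderOf χ)
      = ∑ t, (#{x : F | x ^ orderOf χ = t} : R) * ψ (1 + u * t) := by
        rw [← sum_fiberwise' univ (· ^ orderOf χ) fun t ↦ ψ (1 + u * t)]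
        simp_rw [sum_const, nsmul_eq_mul]
    _ = ∑ i ∈ range (orderOf χ), ∑ t, χ t ^ i * ψ (1 + u * t) := by
        simp_rw [card_filter_pow_eq_sum_mulChar, sum_mul]
        exact sum_comm
    _ = ∑ i ∈ Ico 1 (orderOf χ), ∑ t, χ t ^ i * ψ (1 + u * t) := by
        rw [range_eq_Ico, sum_eq_sum_Ico_succ_bot χ.orderOf_pos]
        simp [hzero]
    _ = ∑ i ∈ Ico 1 (orderOf χ), (χ ^ i) (-u⁻¹) * jacobiSum (χ ^ i) ψ := by
        refine sum_congr rfl fun i hi ↦ ?_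
        rw [← sum_mulChar_mul_mulChar_one_add_mul _ _ hu]
        simp_rw [MulChar.pow_apply' χ (Nat.one_le_iff_ne_zero.mp (mem_Ico.mp hi).1)]

end PowersInFiniteFields

section CubicSum

variable {F : Type*} [Field F] [Fintype F] [DecidableEq F]

/-- The quadratic character sum `∑ x, χ(1 + u x³)` over a finite field: up to sign, the trace of
Frobenius of the curve `y² = 1 + u x³`. -/
def cubicSum (u : F) : ℤ :=
  ∑ x : F, quadraticChar F (1 + u * x ^ 3)

variable (F) in
/-- The quadratic character of `F` with values in `ℂ`, where Jacobi sums with cubic characters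
live. -/
noncomputable def complexQuadraticChar : MulChar F ℂ :=
  (quadraticChar F).ringHomComp (Int.castRingHom ℂ)

theorem cubicSum_mul_pow_three (u : F) {c : F} (hc : c ≠ 0) :
    cubicSum (u * c ^ 3) = cubicSum u := by
  simp only [cubicSum, mul_assoc, ← mul_pow]
  exact (mulLeft_bijective₀ c hc).sum_comp fun x ↦ quadraticChar F (1 + u * x ^ 3)

theorem three_dvd_cubicSum_sub_one (h3 : 3 ∣ Fintype.card F - 1) (u : F) : 3 ∣ cubicSum u - 1 := by
  have hzero : #{x : F | x ^ 3 = 0} = 1 := by simp [filter_eq']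
  have hfib : cubicSum u = ∑ t, (#{x : F | x ^ 3 = t} : ℤ) * quadraticChar F (1 + u * t) := by
    rw [cubicSum, ← sum_fiberwise' univ (· ^ 3) fun t ↦ quadraticChar F (1 + u * t)]
    simp_rw [sum_const, nsmul_eq_mul]
  rw [hfib, ← add_sum_erase univ _ (mem_univ 0), hzero]
  simp only [Nat.cast_one, mul_zero, add_zero, map_one, mul_one, add_sub_cancel_left]
  refine dvd_sum fun t ht ↦ Dvd.dvd.mul_right ?_ _
  by_cases hcube : ∃ c, c ^ 3 = t
  · obtain ⟨c, rfl⟩ := hcube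
    have hc : c ≠ 0 := by rintro rfl; simp at ht
    rw [card_filter_pow_eq_pow h3 hc, Nat.cast_ofNat]
  · rw [filter_eq_empty_iff.mpr fun x _ hx ↦ hcube ⟨x, hx⟩, card_empty, Nat.cast_zero]
    exact dvd_zero 3

theorem even_cubicSum_one (hF : ringChar F ≠ 2) (h3 : 3 ∣ Fintype.card F - 1) :
    Even (cubicSum (1 : F)) := by
  have hchar (y : F) : (quadraticChar F y : ZMod 2) = if y ≠ 0 then 1 else 0 := by
    rcases eq_or_ne y 0 with rfl | hy
    · simp
    · rw [if_pos hy]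
      rcases quadraticChar_dichotomy hy with h | h <;> simp [h]
  have hroots : #{x : F | ¬ 1 + 1 * x ^ 3 ≠ 0} = 3 := by
    convert! card_filter_pow_eq_pow h3 (neg_ne_zero.mpr (one_ne_zero (α := F))) using 3 with x
    rw [not_not, one_mul, Odd.neg_one_pow (n := 3) (by decide), eq_neg_iff_add_eq_zero, add_comm]
  have hcard := card_filter_add_card_filter_not (s := univ) fun x : F ↦ 1 + 1 * x ^ 3 ≠ 0
  rw [hroots, card_univ] at hcard
  have hodd := FiniteField.odd_card_of_char_ne_two hF
  rw [← ZMod.intCast_eq_zero_iff_even, cubicSum, Int.cast_sum]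
  simp_rw [hchar, sum_boole]
  rw [ZMod.natCast_eq_zero_iff_even]
  grind

theorem cast_cubicSum (hF : ringChar F ≠ 2) (h3 : 3 ∣ Fintype.card F - 1) (u : F) :
    (cubicSum u : F) = (Fintype.card F / 2).choose ((Fintype.card F - 1) / 3) *
      (∑ x : F, (x ^ 3) ^ ((Fintype.card F - 1) / 3)) * u ^ ((Fintype.card F - 1) / 3) := by
  have hodd := FiniteField.odd_card_of_char_ne_two hF
  have hone := Fintype.one_lt_card (α := F)
  have hvanish {j : ℕ} (hj : j ≤ Fintype.card F / 2) (hjm : j ≠ (Fintype.card F - 1) / 3) :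
      ∑ x : F, (x ^ 3) ^ j = 0 := by
    rcases Nat.eq_zero_or_pos j with rfl | hj0
    · simp
    simp_rw [← pow_mul]
    refine sum_pow_eq_zero_of_not_dvd ?_
    rintro ⟨k, hk⟩
    obtain ⟨m, hm⟩ := h3
    have hjk : j = m * k := by
      rw [hm, mul_assoc] at hk
      exact Nat.eq_of_mul_eq_mul_left three_pos hk
    obtain rfl | rfl | hk2 : k = 0 ∨ k = 1 ∨ 2 ≤ k := by omega
    · omega
    · omega
    · have := Nat.mul_le_mul_left m hk2
      omega
  calc (cubicSum u : F)
      = ∑ x : F, ∑ j ∈ range (Fintype.card F / 2 + 1),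
          (u ^ j * (Fintype.card F / 2).choose j) * (x ^ 3) ^ j := by
        simp_rw [cubicSum, Int.cast_sum, quadraticChar_eq_pow_of_char_ne_two' hF, add_comm (1 : F),
          add_pow, mul_pow, one_pow, mul_one, mul_right_comm]
    _ = ∑ j ∈ range (Fintype.card F / 2 + 1),
          (u ^ j * (Fintype.card F / 2).choose j) * ∑ x : F, (x ^ 3) ^ j := by
        rw [sum_comm]
        simp_rw [mul_sum]
    _ = _ := by
        rw [sum_eq_single ((Fintype.card F - 1) / 3)]
        · ring
        · intro j hj hjm
          rw [hvanish (Nat.lt_succ_iff.mp (mem_range.mp hj)) hjm, mul_zero]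
        · intro h
          exact absurd (mem_range.mpr (by omega)) h

theorem cast_cubicSum_eq_mul_pow (hF : ringChar F ≠ 2) (h3 : 3 ∣ Fintype.card F - 1) (u : F) :
    (cubicSum u : F) = cubicSum (1 : F) * u ^ ((Fintype.card F - 1) / 3) := by
  rw [cast_cubicSum hF h3 u, cast_cubicSum hF h3 1, one_pow, mul_one]

theorem complexQuadraticChar_ne_one (hF : ringChar F ≠ 2) : complexQuadraticChar F ≠ 1 :=
  (MulChar.ringHomComp_ne_one_iff Int.cast_injective).mpr (quadraticChar_ne_one hF)

theorem cast_cubicSum_eq_jacobiSum (hF : ringChar F ≠ 2) {ψ : MulChar F ℂ} (hψ : orderOf ψ = 3)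
    {u : F} (hu : u ≠ 0) :
    (cubicSum u : ℂ) = ψ u⁻¹ * jacobiSum ψ (complexQuadraticChar F) +
      ψ u⁻¹ ^ 2 * jacobiSum ψ⁻¹ (complexQuadraticChar F) := by
  have hψ3 : ψ ^ 3 = 1 := hψ ▸ pow_orderOf_eq_one ψ
  have hψneg : ψ (-u⁻¹) = ψ u⁻¹ := by
    rw [neg_eq_neg_one_mul, map_mul, MulChar.val_neg_one_eq_one_of_odd_order ⟨1, rfl⟩ hψ3, one_mul]
  have hψinv : ψ ^ 2 = ψ⁻¹ := eq_inv_of_mul_eq_one_left (by rw [← pow_succ, hψ3])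
  have hsum := sum_mulChar_one_add_mul_pow ψ (complexQuadraticChar_ne_one hF) hu
  rw [hψ, show Ico 1 3 = {1, 2} from rfl, sum_pair one_lt_two.ne, pow_one,
    MulChar.pow_apply' ψ two_ne_zero, hψneg, hψinv] at hsum
  rw [← hsum, cubicSum, Int.cast_sum]
  rfl

theorem jacobiSum_mul_jacobiSum_inv_complexQuadraticChar (hF : ringChar F ≠ 2) {ψ : MulChar F ℂ}
    (hψ : orderOf ψ = 3) :
    jacobiSum ψ (complexQuadraticChar F) * jacobiSum ψ⁻¹ (complexQuadraticChar F) =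
      Fintype.card F := by
  have hquad : (complexQuadraticChar F).IsQuadratic := (quadraticChar_isQuadratic F).comp _
  have hinv := hquad.inv
  have hψ1 : ψ ≠ 1 := by rintro rfl; simp at hψ
  have hmul : ψ * complexQuadraticChar F ≠ 1 := by
    intro h
    rw [mul_eq_one_iff_eq_inv, hinv] at h
    have := orderOf_dvd_of_pow_eq_one hquad.sq_eq_one
    rw [← h, hψ] at this
    norm_num at this
  have hchar : ringChar ℂ ≠ ringChar F := by
    rw [ringChar.eq_zero]
    exact (CharP.ringChar_ne_zero_of_finite F).symm
  nth_rw 2 [← hinv]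
  exact jacobiSum_mul_jacobiSum_inv hchar hψ1 (complexQuadraticChar_ne_one hF) hmul

theorem cubicSum_norm_form (hF : ringChar F ≠ 2) (h3 : 3 ∣ Fintype.card F - 1) {u : F}
    (hu : ∀ c, c ^ 3 ≠ u) :
    cubicSum (1 : F) ^ 2 + cubicSum (1 : F) * cubicSum u + cubicSum u ^ 2 =
      3 * Fintype.card F := by
  have hu0 : u ≠ 0 := by rintro rfl; exact hu 0 (by simp)
  obtain ⟨ψ, hψ⟩ := MulChar.exists_mulChar_orderOf F h3 (Complex.isPrimitiveRoot_exp 3 (by simp))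
  have hζ : 1 + ψ u⁻¹ + ψ u⁻¹ ^ 2 = 0 := by
    have hfib : #{x : F | x ^ orderOf ψ = u⁻¹} = 0 := by
      rw [card_eq_zero, filter_eq_empty_iff, hψ]
      exact fun x _ hx ↦ hu x⁻¹ (by rw [inv_pow, hx, inv_inv])
    have := card_filter_pow_eq_sum_mulChar ψ u⁻¹
    rw [hfib, hψ] at this
    simpa [sum_range_succ] using this.symm
  have h1 := cast_cubicSum_eq_jacobiSum hF hψ (one_ne_zero (α := F))
  have hu' := cast_cubicSum_eq_jacobiSum hF hψ hu0
  have hnorm := jacobiSum_mul_jacobiSum_inv_complexQuadraticChar hF hψ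
  rw [inv_one, map_one, one_pow, one_mul, one_mul] at h1
  rw [← Int.cast_inj (α := ℂ)]
  push_cast
  rw [h1, hu', ← hnorm]
  generalize ψ u⁻¹ = ζ at hζ
  generalize jacobiSum ψ _ = J, jacobiSum ψ⁻¹ _ = K
  linear_combination (J ^ 2 + K ^ 2 * (ζ ^ 2 - ζ + 1) + J * K * (2 * ζ - 1)) * hζ

theorem exists_cubicSum_eq_and_card_eq (hF : ringChar F ≠ 2) (h3 : 3 ∣ Fintype.card F - 1) {u : F}
    (hu : ∀ c, c ^ 3 ≠ u) :
    ∃ C E : ℤ, cubicSum (1 : F) = 2 * C ∧ cubicSum u = -C + 3 * E ∧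
      (Fintype.card F : ℤ) = C ^ 2 + 3 * E ^ 2 := by
  obtain ⟨C, hC⟩ := even_iff_exists_two_mul.mp (even_cubicSum_one hF h3)
  obtain ⟨k, hk⟩ := three_dvd_cubicSum_sub_one h3 u
  obtain ⟨l, hl⟩ := three_dvd_cubicSum_sub_one h3 (1 : F)
  have hE : cubicSum u = -C + 3 * (k - l + C) := by omega
  refine ⟨C, k - l + C, hC, hE, ?_⟩
  have hnorm := cubicSum_norm_form hF h3 hu
  rw [hC, hE] at hnorm
  linarith

end CubicSum

theorem sq_eq_sq_of_prime_eq_sq_add_mul_sq {p n A B C D : ℤ} (hp : Prime p) (hn : 1 < n)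
    (hAB : p = A ^ 2 + n * B ^ 2) (hCD : p = C ^ 2 + n * D ^ 2) :
    A ^ 2 = C ^ 2 ∧ B ^ 2 = D ^ 2 := by
  have hzero {X Y : ℤ} (hXY : p ^ 2 = X ^ 2 + n * Y ^ 2) (hY : p ∣ Y) : Y = 0 := by
    obtain ⟨k, rfl⟩ := hY
    by_contra hk
    have hp2 : 0 < p ^ 2 := sq_pos_of_ne_zero hp.ne_zero
    have hk2 : 1 ≤ k ^ 2 := sq_pos_of_ne_zero (right_ne_zero_of_mul hk)
    nlinarith [sq_nonneg X, mul_le_mul_of_nonneg_left hk2 hp2.le]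
  have hfactor : (A * D - C * B) * (A * D + C * B) = p * (D ^ 2 - B ^ 2) := by
    linear_combination (-D ^ 2) * hAB + B ^ 2 * hCD
  have hprod : (A * D - C * B) * (A * D + C * B) = 0 := by
    rcases hp.dvd_or_dvd ⟨_, hfactor⟩ with h | h
    · have hsq : p ^ 2 = (A * C + n * B * D) ^ 2 + n * (A * D - C * B) ^ 2 := by
        linear_combination p * hAB + (A ^ 2 + n * B ^ 2) * hCD
      rw [hzero hsq h, zero_mul]
    · have hsq : p ^ 2 = (A * C - n * B * D) ^ 2 + n * (A * D + C * B) ^ 2 := by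
        linear_combination p * hAB + (A ^ 2 + n * B ^ 2) * hCD
      rw [hzero hsq h, mul_zero]
  have hBD : B ^ 2 = D ^ 2 := by
    rw [hprod] at hfactor
    linear_combination -(mul_eq_zero.mp hfactor.symm).resolve_left hp.ne_zero
  exact ⟨by linear_combination hCD - hAB - n * hBD, hBD⟩

section PrimeField

variable {p : ℕ} [Fact p.Prime] {A B : ℤ}

theorem ringChar_zmod_ne_two_of_mod_three_eq_one (hp : p % 3 = 1) : ringChar (ZMod p) ≠ 2 := by
  rw [ZMod.ringChar_zmod_n]
  rintro rfl
  norm_num at hp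

theorem three_dvd_card_zmod_sub_one (hp : p % 3 = 1) : 3 ∣ Fintype.card (ZMod p) - 1 := by
  rw [ZMod.card]
  omega

theorem intCast_ne_zero_of_eq_sq_add_mul_sq (n : ℤ)
    (hAB : (p : ℤ) = A ^ 2 + n * B ^ 2) : (B : ZMod p) ≠ 0 := by
  intro hB
  have hA : (A : ZMod p) = 0 := by
    have := congrArg (Int.cast : ℤ → ZMod p) hAB
    simpa [hB] using this.symm
  rw [ZMod.intCast_zmod_eq_zero_iff_dvd] at hA hB
  obtain ⟨k, rfl⟩ := hA
  obtain ⟨l, rfl⟩ := hB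
  have hp := Nat.prime_iff_prime_int.mp (Fact.out : p.Prime)
  have hunit : (p : ℤ) * (k ^ 2 + n * l ^ 2) = 1 :=
    mul_left_cancel₀ hp.ne_zero (by linear_combination -hAB)
  exact hp.not_isUnit (.of_mul_eq_one _ hunit)

theorem intCast_mul_inv_sq_of_eq_sq_add_mul_sq (n : ℤ) (hAB : (p : ℤ) = A ^ 2 + n * B ^ 2) :
    (A * (B : ZMod p)⁻¹) ^ 2 = -n := by
  have hB := intCast_ne_zero_of_eq_sq_add_mul_sq n hAB
  have hcast := congrArg (Int.cast : ℤ → ZMod p) hAB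
  push_cast at hcast
  rw [CharP.cast_eq_zero] at hcast
  field_simp
  linear_combination -hcast

theorem cubicSum_of_eq_sq_add_three_mul_sq (hp : p % 3 = 1) (hAB : (p : ℤ) = A ^ 2 + 3 * B ^ 2)
    (hA : A % 3 = 1) {u : ZMod p} (hu : ∀ c, c ^ 3 ≠ u) :
    cubicSum (1 : ZMod p) = -2 * A ∧ (cubicSum u = A + 3 * B ∨ cubicSum u = A - 3 * B) := by
  obtain ⟨C, E, hC, hE, hCE⟩ := exists_cubicSum_eq_and_card_eq
    (ringChar_zmod_ne_two_of_mod_three_eq_one hp) (three_dvd_card_zmod_sub_one hp) hu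
  have hmod := three_dvd_cubicSum_sub_one (three_dvd_card_zmod_sub_one hp) (1 : ZMod p)
  rw [ZMod.card] at hCE
  obtain ⟨hAC, hBE⟩ := sq_eq_sq_of_prime_eq_sq_add_mul_sq
    (Nat.prime_iff_prime_int.mp (Fact.out : p.Prime)) (by norm_num) hAB hCE
  have hCA : C = -A := by
    rcases sq_eq_sq_iff_eq_or_eq_neg.mp hAC with h | h <;> omega
  rcases sq_eq_sq_iff_eq_or_eq_neg.mp hBE with h | h <;> omega

theorem cubicSum_one_of_eq_sq_add_three_mul_sq (hp : p % 3 = 1)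
    (hAB : (p : ℤ) = A ^ 2 + 3 * B ^ 2) (hA : A % 3 = 1) : cubicSum (1 : ZMod p) = -2 * A := by
  obtain ⟨u, hu⟩ := exists_forall_pow_ne (three_dvd_card_zmod_sub_one hp) (by norm_num)
  exact (cubicSum_of_eq_sq_add_three_mul_sq hp hAB hA hu).1

theorem cubicSum_eq_neg_two_mul_of_pow_eq_one (hp : p % 3 = 1)
    (hAB : (p : ℤ) = A ^ 2 + 3 * B ^ 2) (hA : A % 3 = 1) {u : ZMod p} (hu : u ≠ 0)
    (hum : u ^ ((p - 1) / 3) = 1) : cubicSum u = -2 * A := by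
  obtain ⟨c, rfl⟩ := (exists_pow_eq_iff_pow_card_sub_one_div_eq_one
    (three_dvd_card_zmod_sub_one hp) hu).mpr (by rwa [ZMod.card])
  have hc : c ≠ 0 := by rintro rfl; simp at hu
  rw [← one_mul (c ^ 3), cubicSum_mul_pow_three 1 hc,
    cubicSum_one_of_eq_sq_add_three_mul_sq hp hAB hA]

theorem cubicSum_inv_eq_sub_of_pow_eq (hp : p % 3 = 1) (hAB : (p : ℤ) = A ^ 2 + 3 * B ^ 2)
    (hA : A % 3 = 1) {a : ZMod p} (ha : a ≠ 0)
    (ham : a ^ ((p - 1) / 3) = (-1 + A * (B : ZMod p)⁻¹) / 2) : cubicSum a⁻¹ = A - 3 * B := by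
  have hchar := ringChar_zmod_ne_two_of_mod_three_eq_one hp
  have hdvd := three_dvd_card_zmod_sub_one hp
  have h2 : (2 : ZMod p) ≠ 0 := Ring.two_ne_zero hchar
  have h3 : (3 : ZMod p) ≠ 0 := natCast_ne_zero_of_dvd_card_sub_one hdvd
  have hB := intCast_ne_zero_of_eq_sq_add_mul_sq 3 hAB
  have hs2 := intCast_mul_inv_sq_of_eq_sq_add_mul_sq 3 hAB
  have hsB : A * (B : ZMod p)⁻¹ * B = A := inv_mul_cancel_right₀ hB _
  generalize A * (B : ZMod p)⁻¹ = s at ham hs2 hsB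
  push_cast at hs2
  have hinv : a⁻¹ ^ ((Fintype.card (ZMod p) - 1) / 3) = (-1 - s) / 2 := by
    rw [ZMod.card, inv_pow, ham]
    refine inv_eq_of_mul_eq_one_right ?_
    field_simp
    linear_combination -hs2
  have hne : ∀ c, c ^ 3 ≠ a⁻¹ := by
    intro c hc
    rw [(exists_pow_eq_iff_pow_card_sub_one_div_eq_one hdvd (inv_ne_zero ha)).mp ⟨c, hc⟩,
      eq_div_iff h2] at hinv
    have : (2 : ZMod p) * 2 * 3 = 0 := by linear_combination hs2 + (3 - s) * hinv
    exact mul_ne_zero (mul_ne_zero h2 h2) h3 this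
  obtain ⟨hone, hplus | hminus⟩ := cubicSum_of_eq_sq_add_three_mul_sq hp hAB hA hne
  · have hcast := cast_cubicSum_eq_mul_pow hchar hdvd a⁻¹
    rw [hinv, hone, hplus] at hcast
    push_cast at hcast
    field_simp at hcast
    have : 2 * 3 * (B : ZMod p) = 0 := by linear_combination hcast - s * hsB + B * hs2
    exact absurd this (mul_ne_zero (mul_ne_zero h2 h3) hB)
  · exact hminus

end PrimeField

section Counting

variable {F : Type*} [Field F] [Fintype F] [DecidableEq F]

theorem card_filter_quadratic_eq_zero (hF : ringChar F ≠ 2) {a : F} (ha : a ≠ 0) (b c : F) :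
    (#{x : F | a * (x * x) + b * x + c = 0} : ℤ) = quadraticChar F (discrim a b c) + 1 := by
  have h2 : (2 : F) ≠ 0 := Ring.two_ne_zero hF
  have : NeZero (2 : F) := ⟨h2⟩
  rw [← quadraticChar_card_sqrts hF]
  congr 1
  refine card_bij (fun x _ ↦ 2 * a * x + b) ?_ ?_ ?_
  · intro x hx
    simpa [quadratic_eq_zero_iff_discrim_eq_sq ha, eq_comm] using hx
  · intro x _ y _ hxy
    exact mul_left_cancel₀ (mul_ne_zero h2 ha) (add_right_cancel hxy)
  · intro y hy
    have hx : 2 * a * ((y - b) / (2 * a)) + b = y := by field_simp; ring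
    refine ⟨(y - b) / (2 * a), ?_, hx⟩
    simpa [quadratic_eq_zero_iff_discrim_eq_sq ha, hx, eq_comm] using hy

/-- The `y` which, together with `x` and a third root, make up a fibre of `x ↦ x + a / (2 x²)`: for
nonzero `x ≠ y`, clearing denominators in `x + a / (2 x²) = y + a / (2 y²)` and dividing by `x - y`
leaves `2 x² y² = a (x + y)`. A point `x` is its own partner when it is a multiple root. -/
def fiberPartners (a x : F) : Finset F :=
  {y | 2 * x ^ 2 * y ^ 2 = a * (x + y)}

theorem add_div_eq_add_div_iff (hF : ringChar F ≠ 2) {a x y : F} (hx : x ≠ 0) (hy : y ≠ 0) :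
    y + a / (2 * y ^ 2) = x + a / (2 * x ^ 2) ↔ y = x ∨ y ∈ fiberPartners a x := by
  have h2 : (2 : F) ≠ 0 := Ring.two_ne_zero hF
  have hfactor : y + a / (2 * y ^ 2) - (x + a / (2 * x ^ 2)) =
      (y - x) * (2 * x ^ 2 * y ^ 2 - a * (x + y)) / (2 * x ^ 2 * y ^ 2) := by
    field_simp
    ring
  have hden : 2 * x ^ 2 * y ^ 2 ≠ 0 := by simp [h2, hx, hy]
  rw [fiberPartners, mem_filter_univ, ← sub_eq_zero, hfactor, div_eq_zero_iff,
    or_iff_left hden, mul_eq_zero, sub_eq_zero, sub_eq_zero]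

theorem ne_zero_of_mem_fiberPartners {a x y : F} (ha : a ≠ 0) (hx : x ≠ 0)
    (hy : y ∈ fiberPartners a x) : y ≠ 0 := by
  rintro rfl
  simp [fiberPartners, ha, hx] at hy

theorem filter_add_div_eq_insert_fiberPartners (hF : ringChar F ≠ 2) {a x : F} (ha : a ≠ 0)
    (hx : x ≠ 0) :
    {y ∈ univ.erase (0 : F) | y + a / (2 * y ^ 2) = x + a / (2 * x ^ 2)} =
      insert x (fiberPartners a x) := by
  ext y
  rw [mem_filter, mem_erase, mem_insert]
  constructor
  · rintro ⟨⟨hy, -⟩, hxy⟩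
    exact (add_div_eq_add_div_iff hF hx hy).mp hxy
  · intro h
    have hy : y ≠ 0 := h.elim (fun hyx ↦ hyx ▸ hx) (ne_zero_of_mem_fiberPartners ha hx)
    exact ⟨⟨hy, mem_univ y⟩, (add_div_eq_add_div_iff hF hx hy).mpr h⟩

theorem card_fiberPartners (hF : ringChar F ≠ 2) {a x : F} (ha : a ≠ 0) (hx : x ≠ 0) :
    (#(fiberPartners a x) : ℤ) = quadraticChar F (1 + 8 * a⁻¹ * x ^ 3) + 1 := by
  have h2 : (2 : F) ≠ 0 := Ring.two_ne_zero hF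
  have hdisc : discrim (2 * x ^ 2) (-a) (-(a * x)) = a ^ 2 * (1 + 8 * a⁻¹ * x ^ 3) := by
    rw [discrim]
    field_simp
    ring
  have hquad := card_filter_quadratic_eq_zero hF (mul_ne_zero h2 (pow_ne_zero 2 hx)) (-a) (-(a * x))
  rw [hdisc, map_mul, quadraticChar_sq_one' ha, one_mul] at hquad
  rw [← hquad, fiberPartners]
  congr 3 with y
  constructor <;> intro h <;> linear_combination h

theorem fiberPartners_eq_pair (hF : ringChar F ≠ 2) {a x y z : F} (hx : x ≠ 0)
    (hsum : x * y + y * z + z * x = 0) (hprod : 2 * x * y * z = -a) :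
    fiberPartners a x = {y, z} := by
  have h2 : (2 : F) ≠ 0 := Ring.two_ne_zero hF
  ext t
  have hfactor : 2 * x ^ 2 * t ^ 2 - a * (x + t) = 2 * x ^ 2 * ((t - y) * (t - z)) := by
    linear_combination (2 * x * t) * hsum - (t + x) * hprod
  rw [fiberPartners, mem_filter_univ, mem_insert, mem_singleton, ← sub_eq_zero, hfactor,
    mul_eq_zero_iff_left (mul_ne_zero h2 (pow_ne_zero 2 hx)), mul_eq_zero, sub_eq_zero, sub_eq_zero]

theorem sum_three_sub_card_pair {α : Type*} [DecidableEq α] {x y z : α} (h : ¬ (x = y ∧ y = z))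
    {s : α → Finset α} (hx : s x = {y, z}) (hy : s y = {x, z}) (hz : s z = {x, y}) :
    ∑ t ∈ {x, y, z}, (3 - #(s t) : ℤ) = 3 := by
  by_cases hxy : x = y <;> by_cases hyz : y = z <;> by_cases hxz : x = z <;> simp_all

theorem sum_insert_fiberPartners (hF : ringChar F ≠ 2) (h3 : (3 : F) ≠ 0) {a x : F} (ha : a ≠ 0)
    (hx : x ≠ 0) : ∑ t ∈ insert x (fiberPartners a x), (3 - #(fiberPartners a t) : ℤ) = 3 := by
  have h2 : (2 : F) ≠ 0 := Ring.two_ne_zero hF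
  rcases (fiberPartners a x).eq_empty_or_nonempty with hempty | ⟨y, hy⟩
  · simp [hempty]
  have hy0 := ne_zero_of_mem_fiberPartners ha hx hy
  obtain ⟨z, hz⟩ : ∃ z, z = -a / (2 * x * y) := ⟨_, rfl⟩
  have hprod : 2 * x * y * z = -a := by rw [hz]; field_simp
  have hsum : x * y + y * z + z * x = 0 := by
    rw [fiberPartners, mem_filter_univ] at hy
    rw [hz]
    field_simp
    linear_combination hy
  have hz0 : z ≠ 0 := by
    rintro rfl
    simp [ha] at hprod
  have hne : ¬ (x = y ∧ y = z) := by
    rintro ⟨rfl, rfl⟩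
    have : 3 * x ^ 2 = 0 := by linear_combination hsum
    exact mul_ne_zero h3 (pow_ne_zero 2 hx) this
  rw [fiberPartners_eq_pair hF hx hsum hprod]
  exact sum_three_sub_card_pair hne (fiberPartners_eq_pair hF hx hsum hprod)
    (fiberPartners_eq_pair hF hy0 (by linear_combination hsum) (by linear_combination hprod))
    (fiberPartners_eq_pair hF hz0 (by linear_combination hsum) (by linear_combination hprod))

theorem three_mul_card_image_add_div (hF : ringChar F ≠ 2) (h3 : (3 : F) ≠ 0) {a : F}
    (ha : a ≠ 0) :
    3 * (#((univ.erase (0 : F)).image fun x ↦ x + a / (2 * x ^ 2)) : ℤ) =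
      2 * Fintype.card F - 1 - cubicSum a⁻¹ := by
  have h2 : (2 : F) ≠ 0 := Ring.two_ne_zero hF
  have hcubic : ∑ x ∈ univ.erase (0 : F), quadraticChar F (1 + 8 * a⁻¹ * x ^ 3) =
      cubicSum a⁻¹ - 1 := by
    rw [← cubicSum_mul_pow_three a⁻¹ h2, cubicSum, ← add_sum_erase univ _ (mem_univ 0)]
    norm_num [mul_comm a⁻¹]
  calc 3 * (#((univ.erase (0 : F)).image fun x ↦ x + a / (2 * x ^ 2)) : ℤ)
      = ∑ b ∈ (univ.erase (0 : F)).image fun x ↦ x + a / (2 * x ^ 2),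
          ∑ t ∈ univ.erase (0 : F) with t + a / (2 * t ^ 2) = b,
            (3 - #(fiberPartners a t) : ℤ) := by
        rw [sum_eq_card_nsmul (b := 3), nsmul_eq_mul, mul_comm]
        intro b hb
        obtain ⟨x, hx, rfl⟩ := mem_image.mp hb
        rw [filter_add_div_eq_insert_fiberPartners hF ha (ne_of_mem_erase hx)]
        exact sum_insert_fiberPartners hF h3 ha (ne_of_mem_erase hx)
    _ = ∑ t ∈ univ.erase (0 : F), (3 - #(fiberPartners a t) : ℤ) :=
        sum_fiberwise_of_maps_to (fun _ ↦ mem_image_of_mem _) _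
    _ = ∑ t ∈ univ.erase (0 : F), (2 - quadraticChar F (1 + 8 * a⁻¹ * t ^ 3)) := by
        refine sum_congr rfl fun t ht ↦ ?_
        rw [card_fiberPartners hF ha (ne_of_mem_erase ht)]
        ring
    _ = 2 * Fintype.card F - 1 - cubicSum a⁻¹ := by
        rw [sum_sub_distrib, hcubic, sum_const, card_erase_of_mem (mem_univ 0), card_univ,
          nsmul_eq_mul, Nat.cast_pred Fintype.card_pos]
        ring

end Counting

theorem card_filter_modEq_eq_card_image_add_div {p : ℕ} [Fact p.Prime] (h2 : (2 : ZMod p) ≠ 0)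
    (a : ℤ) :
    #((range p).filter fun b : ℕ ↦ ∃ x ∈ Icc 1 (p - 1),
      2 * (x : ℤ) ^ 3 + a ≡ 2 * (b : ℤ) * (x : ℤ) ^ 2 [ZMOD (p : ℤ)]) =
    #((univ.erase 0).image fun x : ZMod p ↦ x + a / (2 * x ^ 2)) := by
  have hvalue {x b : ZMod p} (hx : x ≠ 0) :
      2 * x ^ 3 + a = 2 * b * x ^ 2 ↔ x + a / (2 * x ^ 2) = b := by
    field_simp
  have hcast (b x : ℕ) : 2 * (x : ℤ) ^ 3 + a ≡ 2 * (b : ℤ) * (x : ℤ) ^ 2 [ZMOD (p : ℤ)] ↔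
      2 * (x : ZMod p) ^ 3 + a = 2 * b * (x : ZMod p) ^ 2 := by
    rw [← ZMod.intCast_eq_intCast_iff]
    push_cast
    rfl
  simp_rw [hcast]
  refine card_bij (fun b _ ↦ (b : ZMod p)) ?_ ?_ ?_
  · intro b hb
    obtain ⟨-, x, hx, hxb⟩ := mem_filter.mp hb
    have hx0 : (x : ZMod p) ≠ 0 := by
      rw [Ne, ZMod.natCast_eq_zero_iff]
      intro hdvd
      have := Nat.le_of_dvd (mem_Icc.mp hx).1 hdvd
      grind
    exact mem_image.mpr ⟨x, by simp [hx0], (hvalue hx0).mp hxb⟩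
  · intro b hb c hc hbc
    rw [ZMod.natCast_eq_natCast_iff'] at hbc
    rwa [Nat.mod_eq_of_lt (mem_range.mp (mem_filter.mp hb).1),
      Nat.mod_eq_of_lt (mem_range.mp (mem_filter.mp hc).1)] at hbc
  · intro b hb
    obtain ⟨x, hx, hxb⟩ := mem_image.mp hb
    have hx0 := ne_of_mem_erase hx
    have hxval : x.val ∈ Icc 1 (p - 1) :=
      mem_Icc.mpr ⟨Nat.one_le_iff_ne_zero.mpr ((ZMod.val_ne_zero x).mpr hx0),
        Nat.le_sub_one_of_lt (ZMod.val_lt x)⟩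
    refine ⟨b.val, ?_, ZMod.natCast_zmod_val b⟩
    rw [mem_filter, mem_range]
    refine ⟨ZMod.val_lt b, x.val, hxval, ?_⟩
    rw [ZMod.natCast_zmod_val, ZMod.natCast_zmod_val]
    exact (hvalue hx0).mpr hxb

theorem stmt_5 (p : ℕ) [hp : Fact p.Prime] (hp1 : p % 3 = 1)
    (A B : ℤ) (hpAB : (p : ℤ) = A ^ 2 + 3 * B ^ 2) (hA : A % 3 = 1)
    (a : ℤ) (ha : ¬ (p : ℤ) ∣ a) :
    (((a : ZMod p)) ^ ((p - 1) / 3) = 1 →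
      3 * (((Finset.range p).filter (fun b : ℕ =>
      ∃ x ∈ Finset.Icc 1 (p - 1),
        2 * (x : ℤ) ^ 3 + (a) ≡ 2 * (b : ℤ) * (x : ℤ) ^ 2 [ZMOD (p : ℤ)])).card : ℤ) = 2 * (p : ℤ) - 1 + 2 * A) ∧
    (((a : ZMod p)) ^ ((p - 1) / 3) = (-1 + (A : ZMod p) * (B : ZMod p)⁻¹) / 2 →
      3 * (((Finset.range p).filter (fun b : ℕ =>
      ∃ x ∈ Finset.Icc 1 (p - 1),
        2 * (x : ℤ) ^ 3 + (a) ≡ 2 * (b : ℤ) * (x : ℤ) ^ 2 [ZMOD (p : ℤ)])).card : ℤ) = 2 * (p : ℤ) - 1 - A + 3 * B) ∧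
    (((a : ZMod p)) ^ ((p - 1) / 3) = (-1 - (A : ZMod p) * (B : ZMod p)⁻¹) / 2 →
      3 * (((Finset.range p).filter (fun b : ℕ =>
      ∃ x ∈ Finset.Icc 1 (p - 1),
        2 * (x : ℤ) ^ 3 + (a) ≡ 2 * (b : ℤ) * (x : ℤ) ^ 2 [ZMOD (p : ℤ)])).card : ℤ) = 2 * (p : ℤ) - 1 - A - 3 * B) := by
  have hchar := ringChar_zmod_ne_two_of_mod_three_eq_one hp1
  have h3 : (3 : ZMod p) ≠ 0 :=
    natCast_ne_zero_of_dvd_card_sub_one (three_dvd_card_zmod_sub_one hp1)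
  have ha0 : (a : ZMod p) ≠ 0 := by rwa [Ne, ZMod.intCast_zmod_eq_zero_iff_dvd]
  have hcount := three_mul_card_image_add_div hchar h3 ha0
  rw [ZMod.card] at hcount
  rw [card_filter_modEq_eq_card_image_add_div (Ring.two_ne_zero hchar), hcount]
  refine ⟨fun h ↦ ?_, fun h ↦ ?_, fun h ↦ ?_⟩
  · rw [cubicSum_eq_neg_two_mul_of_pow_eq_one hp1 hpAB hA (inv_ne_zero ha0)
      (by rw [inv_pow, h, inv_one])]
    ring
  · rw [cubicSum_inv_eq_sub_of_pow_eq hp1 hpAB hA ha0 h]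
    ring
  · have hpAB' : (p : ℤ) = A ^ 2 + 3 * (-B) ^ 2 := by rw [neg_sq, hpAB]
    have h' : (a : ZMod p) ^ ((p - 1) / 3) = (-1 + A * ((-B : ℤ) : ZMod p)⁻¹) / 2 := by
      rw [h, Int.cast_neg, inv_neg, mul_neg, sub_eq_add_neg]
    rw [cubicSum_inv_eq_sub_of_pow_eq hp1 hpAB' hA ha0 h']
    ring
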